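/- Let a < b be real, σ ∈ (0,1], let φ be continuously differentiable on an open interval containing [a,b] with φ′ > 0 there, let α > 0, β > 0, and let f : ℝ → ℂ be continuous on [a,b]. Then for every t ∈ [a,b], (I_b^{α,σ,φ} (I_b^{β,σ,φ} f))(t) = (I_b^{α+β,σ,φ} f)(t) (semigroup property of the right proportional fractional integrals with respect to φ). -/

import Mathlib

open MeasureTheory intervalIntegral Set

/-- The right proportional fractional integral of `f` of order `α > 0` with respect to `φ`
(with derivative `φ'`), proportion `σ`, based at `b`:
`(I_b^{α,σ,φ} f)(t) = (1/(σ^α Γ(α))) ∫_t^b e^{((σ-1)/σ)(φ(τ)-φ(t))} (φ(τ)-φ(t))^{α-1} f(τ) φ'(τ) dτ`. -/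
noncomputable def propIntRight (b α σ : ℝ) (φ φ' : ℝ → ℝ) (f : ℝ → ℂ) (t : ℝ) : ℂ :=
  ((σ ^ α * Real.Gamma α)⁻¹ : ℝ) •
    ∫ τ in t..b,
      (Real.exp ((σ - 1) / σ * (φ τ - φ t)) * (φ τ - φ t) ^ (α - 1) * φ' τ) • f τ


/-- Scaled real Beta integral on `[0, L]`. -/
lemma aux_beta0 {α β L : ℝ} (hα : 0 < α) (hβ : 0 < β) (hL : 0 < L) :
    ∫ x in (0:ℝ)..L, x ^ (α - 1) * (L - x) ^ (β - 1)
      = ProbabilityTheory.beta α β * L ^ (α + β - 1) := by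
  have h := Complex.betaIntegral_scaled (α : ℂ) (β : ℂ) hL
  have hb : Complex.betaIntegral (α : ℂ) (β : ℂ) = ((ProbabilityTheory.beta α β : ℝ) : ℂ) := by
    rw [Complex.betaIntegral_eq_Gamma_mul_div _ _ (by simpa) (by simpa)]
    simp_rw [ProbabilityTheory.beta, ← Complex.ofReal_add α β, Complex.Gamma_ofReal]
    norm_cast
  rw [hb] at h
  apply Complex.ofReal_injective
  rw [← intervalIntegral.integral_ofReal]
  have e : ((ProbabilityTheory.beta α β * L ^ (α + β - 1) : ℝ) : ℂ)
      = (L : ℂ) ^ ((α : ℂ) + β - 1) * ((ProbabilityTheory.beta α β : ℝ) : ℂ) := by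
    rw [Complex.ofReal_mul, Complex.ofReal_cpow hL.le]
    push_cast
    ring
  rw [e, ← h]
  apply intervalIntegral.integral_congr
  intro x hx
  rw [uIcc_of_le hL.le] at hx
  simp only
  rw [Complex.ofReal_mul, Complex.ofReal_cpow hx.1, Complex.ofReal_cpow (sub_nonneg.2 hx.2)]
  push_cast
  rfl

/-- Real Beta integral on `(x, y)`. -/
lemma aux_beta1 {α β x y : ℝ} (hα : 0 < α) (hβ : 0 < β) (hxy : x < y) :
    ∫ u in Ioo x y, (u - x) ^ (α - 1) * (y - u) ^ (β - 1)
      = ProbabilityTheory.beta α β * (y - x) ^ (α + β - 1) := by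
  rw [← aux_beta0 hα hβ (sub_pos.2 hxy), ← integral_Ioc_eq_integral_Ioo,
    ← intervalIntegral.integral_of_le hxy.le]
  have := intervalIntegral.integral_comp_sub_right (a := x) (b := y)
    (fun u : ℝ => u ^ (α - 1) * ((y - x) - u) ^ (β - 1)) x
  rw [sub_self] at this
  rw [← this]
  simp

lemma aux_image {φ : ℝ → ℝ} {x y : ℝ} (hxy : x < y) (hc : ContinuousOn φ (Icc x y))
    (hm : StrictMonoOn φ (Icc x y)) : φ '' Ioo x y = Ioo (φ x) (φ y) := by
  apply Subset.antisymm
  · rintro _ ⟨u, hu, rfl⟩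
    exact ⟨hm (left_mem_Icc.2 hxy.le) (Ioo_subset_Icc_self hu) hu.1,
      hm (Ioo_subset_Icc_self hu) (right_mem_Icc.2 hxy.le) hu.2⟩
  · exact intermediate_value_Ioo hxy.le hc

/-- Beta integral with respect to `φ`. -/
lemma aux_beta2 {φ φ' : ℝ → ℝ} {α β x y : ℝ} (hα : 0 < α) (hβ : 0 < β) (hxy : x < y)
    (hd : ∀ u ∈ Icc x y, HasDerivAt φ (φ' u) u) (hp : ∀ u ∈ Icc x y, 0 < φ' u)
    (hm : StrictMonoOn φ (Icc x y)) :
    ∫ u in Ioo x y, (φ u - φ x) ^ (α - 1) * (φ y - φ u) ^ (β - 1) * φ' u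
      = ProbabilityTheory.beta α β * (φ y - φ x) ^ (α + β - 1) := by
  have hc : ContinuousOn φ (Icc x y) := fun u hu => (hd u hu).continuousAt.continuousWithinAt
  rw [← aux_beta1 hα hβ (hm (left_mem_Icc.2 hxy.le) (right_mem_Icc.2 hxy.le) hxy),
    ← aux_image hxy hc hm,
    integral_image_eq_integral_abs_deriv_smul measurableSet_Ioo
      (fun u hu => (hd u (Ioo_subset_Icc_self hu)).hasDerivWithinAt)
      (hm.injOn.mono Ioo_subset_Icc_self)]
  apply setIntegral_congr_fun measurableSet_Ioo
  intro u hu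
  simp only [smul_eq_mul]
  rw [abs_of_pos (hp u (Ioo_subset_Icc_self hu))]
  ring

lemma aux_beta2_int {φ φ' : ℝ → ℝ} {α β x y : ℝ} (hα : 0 < α) (hβ : 0 < β) (hxy : x < y)
    (hd : ∀ u ∈ Icc x y, HasDerivAt φ (φ' u) u) (hp : ∀ u ∈ Icc x y, 0 < φ' u)
    (hm : StrictMonoOn φ (Icc x y)) :
    IntegrableOn (fun u => (φ u - φ x) ^ (α - 1) * (φ y - φ u) ^ (β - 1) * φ' u) (Ioo x y) := by
  by_contra h
  have h1 := aux_beta2 hα hβ hxy hd hp hm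
  rw [integral_undef h] at h1
  have h2 := sub_pos.2 (hm (left_mem_Icc.2 hxy.le) (right_mem_Icc.2 hxy.le) hxy)
  have := mul_pos (ProbabilityTheory.beta_pos hα hβ) (Real.rpow_pos_of_pos h2 (α + β - 1))
  linarith

/-- Composition of the (unnormalised) integrals. -/
lemma aux_main {φ φ' : ℝ → ℝ} {α β c t b : ℝ} {f : ℝ → ℂ} (hα : 0 < α) (hβ : 0 < β) (htb : t < b)
    (hd : ∀ u ∈ Icc t b, HasDerivAt φ (φ' u) u) (hp : ∀ u ∈ Icc t b, 0 < φ' u)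
    (hm : StrictMonoOn φ (Icc t b)) (hc' : ContinuousOn φ' (Icc t b))
    (hf : ContinuousOn f (Icc t b)) :
    ∫ τ in Ioc t b, (Real.exp (c * (φ τ - φ t)) * (φ τ - φ t) ^ (α - 1) * φ' τ) •
      ∫ s in Ioc τ b, (Real.exp (c * (φ s - φ τ)) * (φ s - φ τ) ^ (β - 1) * φ' s) • f s
    = ProbabilityTheory.beta α β • ∫ s in Ioc t b,
      (Real.exp (c * (φ s - φ t)) * (φ s - φ t) ^ (α + β - 1) * φ' s) • f s := by
  have hc : ContinuousOn φ (Icc t b) := fun u hu => (hd u hu).continuousAt.continuousWithinAt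
  let G : ℝ → ℝ → ℂ := fun τ s =>
    ((φ τ - φ t) ^ (α - 1) * (φ s - φ τ) ^ (β - 1) * φ' τ) •
      ((Real.exp (c * (φ s - φ t)) * φ' s) • f s)
  let F : ℝ → ℝ → ℂ := fun τ s => (Ioi τ).indicator (G τ) s
  have hF' : ∀ τ s, F τ s = (Iio s).indicator (fun τ => G τ s) τ := by
    intro τ s
    simp only [F, indicator, mem_Ioi, mem_Iio]
  have sub : ∀ s ∈ Ioc t b, Icc t s ⊆ Icc t b := fun s hs => Icc_subset_Icc_right hs.2
  have hIoo : ∀ s ∈ Ioc t b, Ioc t b ∩ Iio s = Ioo t s := by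
    intro s hs
    ext u
    simp only [mem_inter_iff, mem_Ioc, mem_Iio, mem_Ioo]
    exact ⟨fun h => ⟨h.1.1, h.2⟩, fun h => ⟨⟨h.1, h.2.le.trans hs.2⟩, h.2⟩⟩
  -- inner integrals
  have hin : ∀ s ∈ Ioc t b, ∫ τ in Ioc t b, F τ s = ProbabilityTheory.beta α β •
      ((Real.exp (c * (φ s - φ t)) * (φ s - φ t) ^ (α + β - 1) * φ' s) • f s) := by
    intro s hs
    simp_rw [hF']
    rw [setIntegral_indicator measurableSet_Iio, hIoo s hs]
    simp only [G]
    rw [_root_.integral_smul_const, aux_beta2 hα hβ hs.1 (fun u hu => hd u (sub s hs hu))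
      (fun u hu => hp u (sub s hs hu)) (hm.mono (sub s hs)), smul_smul, smul_smul]
    congr 1
    ring
  have hinI : ∀ s ∈ Ioc t b, IntegrableOn (fun τ => F τ s) (Ioc t b) := by
    intro s hs
    simp_rw [hF']
    rw [integrableOn_indicator_iff measurableSet_Iio, inter_comm, hIoo s hs]
    exact Integrable.smul_const (aux_beta2_int hα hβ hs.1 (fun u hu => hd u (sub s hs hu))
      (fun u hu => hp u (sub s hs hu)) (hm.mono (sub s hs))) _
  have hinN : ∀ s ∈ Ioc t b, ∫ τ in Ioc t b, ‖F τ s‖ = ProbabilityTheory.beta α β *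
      ((Real.exp (c * (φ s - φ t)) * ‖f s‖) * ((φ s - φ t) ^ (α + β - 1) * φ' s)) := by
    intro s hs
    have e : ∀ τ, ‖F τ s‖ = (Iio s).indicator (fun τ => ‖G τ s‖) τ := by
      intro τ
      rw [hF', norm_indicator_eq_indicator_norm]
    simp_rw [e]
    rw [setIntegral_indicator measurableSet_Iio, hIoo s hs]
    have e2 : ∀ τ ∈ Ioo t s, ‖G τ s‖ = ((φ τ - φ t) ^ (α - 1) * (φ s - φ τ) ^ (β - 1) * φ' τ) *
      ‖(Real.exp (c * (φ s - φ t)) * φ' s) • f s‖ := by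
      intro τ hτ
      have hτ' : τ ∈ Icc t b := sub s hs (Ioo_subset_Icc_self hτ)
      have h1 := sub_pos.2 (hm (left_mem_Icc.2 htb.le) hτ' hτ.1)
      have h2 := sub_pos.2 (hm hτ' (Ioc_subset_Icc_self hs) hτ.2)
      simp only [G]
      rw [norm_smul, Real.norm_of_nonneg]
      have := hp τ hτ'
      positivity
    rw [setIntegral_congr_fun measurableSet_Ioo e2, MeasureTheory.integral_mul_const,
      aux_beta2 hα hβ hs.1 (fun u hu => hd u (sub s hs hu))
      (fun u hu => hp u (sub s hs hu)) (hm.mono (sub s hs)), norm_smul, Real.norm_of_nonneg]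
    · ring
    · have := hp s (Ioc_subset_Icc_self hs)
      positivity
  have hmeas : AEStronglyMeasurable (Function.uncurry F)
      ((volume.restrict (Ioc t b)).prod (volume.restrict (Ioc t b))) := by
    have hset : MeasurableSet {p : ℝ × ℝ | p.1 < p.2} := measurableSet_lt measurable_fst measurable_snd
    have e : Function.uncurry F = {p : ℝ × ℝ | p.1 < p.2}.indicator (Function.uncurry G) := by
      ext ⟨x, y⟩
      simp only [F, Function.uncurry, indicator, mem_Ioi, mem_ofPred_eq]
    rw [e, aestronglyMeasurable_indicator_iff hset, Measure.prod_restrict,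
      Measure.restrict_restrict hset]
    refine ContinuousOn.aestronglyMeasurable ?_
      (hset.inter (measurableSet_Ioc.prod measurableSet_Ioc))
    set T := {p : ℝ × ℝ | p.1 < p.2} ∩ Ioc t b ×ˢ Ioc t b with hT
    have m1 : MapsTo Prod.fst T (Icc t b) := fun p hp => Ioc_subset_Icc_self hp.2.1
    have m2 : MapsTo Prod.snd T (Icc t b) := fun p hp => Ioc_subset_Icc_self hp.2.2
    have c1 : ContinuousOn (fun p : ℝ × ℝ => φ p.1) T := hc.comp continuousOn_fst m1
    have c2 : ContinuousOn (fun p : ℝ × ℝ => φ p.2) T := hc.comp continuousOn_snd m2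
    have c3 : ContinuousOn (fun p : ℝ × ℝ => φ' p.1) T := hc'.comp continuousOn_fst m1
    have c4 : ContinuousOn (fun p : ℝ × ℝ => φ' p.2) T := hc'.comp continuousOn_snd m2
    have c5 : ContinuousOn (fun p : ℝ × ℝ => f p.2) T := hf.comp continuousOn_snd m2
    have c6 : ContinuousOn (fun p : ℝ × ℝ => (φ p.1 - φ t) ^ (α - 1)) T :=
      (c1.sub continuousOn_const).rpow_const fun p hp =>
        Or.inl (sub_pos.2 (hm (left_mem_Icc.2 htb.le) (m1 hp) hp.2.1.1)).ne'
    have c7 : ContinuousOn (fun p : ℝ × ℝ => (φ p.2 - φ p.1) ^ (β - 1)) T :=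
      (c2.sub c1).rpow_const fun p hp =>
        Or.inl (sub_pos.2 (hm (m1 hp) (m2 hp) hp.1)).ne'
    have c8 : ContinuousOn (fun p : ℝ × ℝ => Real.exp (c * (φ p.2 - φ t))) T :=
      (continuousOn_const.mul (c2.sub continuousOn_const)).rexp
    exact ((c6.mul c7).mul c3).smul ((c8.mul c4).smul c5)
  have hpow : IntegrableOn (fun s => (φ s - φ t) ^ (α + β - 1) * φ' s) (Ioc t b) := by
    have := aux_beta2_int (add_pos hα hβ) one_pos htb hd hp hm
    rw [integrableOn_Ioc_iff_integrableOn_Ioo]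
    simpa using this
  have hint : Integrable (Function.uncurry F)
      ((volume.restrict (Ioc t b)).prod (volume.restrict (Ioc t b))) := by
    rw [integrable_prod_iff' hmeas]
    refine ⟨?_, ?_⟩
    · filter_upwards [ae_restrict_mem measurableSet_Ioc] with s hs
      exact hinI s hs
    · have key : IntegrableOn (fun s => ProbabilityTheory.beta α β *
        ((Real.exp (c * (φ s - φ t)) * ‖f s‖) * ((φ s - φ t) ^ (α + β - 1) * φ' s))) (Ioc t b) := by
        apply Integrable.const_mul
        have hcont : ContinuousOn (fun s => Real.exp (c * (φ s - φ t)) * ‖f s‖) (Icc t b) :=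
          (continuousOn_const.mul (hc.sub continuousOn_const)).rexp.mul hf.norm
        have h' : IntegrableOn (fun s => (φ s - φ t) ^ (α + β - 1) * φ' s) (Icc t b) :=
          (integrableOn_Icc_iff_integrableOn_Ioc enorm_ne_top).2 hpow
        exact (h'.continuousOn_mul hcont isCompact_Icc).mono_set Ioc_subset_Icc_self
      refine key.congr ?_
      filter_upwards [ae_restrict_mem measurableSet_Ioc] with s hs
      exact (hinN s hs).symm
  calc _ = ∫ τ in Ioc t b, ∫ s in Ioc t b, F τ s := by
        apply setIntegral_congr_fun measurableSet_Ioc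
        intro τ hτ
        simp only [F]
        rw [setIntegral_indicator measurableSet_Ioi]
        have : Ioc t b ∩ Ioi τ = Ioc τ b := by
          ext u
          simp only [mem_inter_iff, mem_Ioc, mem_Ioi]
          exact ⟨fun h => ⟨h.2, h.1.2⟩, fun h => ⟨⟨hτ.1.trans h.1, h.2⟩, h.1⟩⟩
        rw [this, ← MeasureTheory.integral_smul]
        apply setIntegral_congr_fun measurableSet_Ioc
        intro s hs
        simp only [G, smul_smul]
        congr 1
        have : Real.exp (c * (φ s - φ t))
            = Real.exp (c * (φ τ - φ t)) * Real.exp (c * (φ s - φ τ)) := by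
          rw [← Real.exp_add]
          congr 1
          ring
        rw [this]
        ring
    _ = ∫ s in Ioc t b, ∫ τ in Ioc t b, F τ s := integral_integral_swap hint
    _ = _ := by
        rw [setIntegral_congr_fun measurableSet_Ioc hin, MeasureTheory.integral_smul]

theorem propIntRight_semigroup (a b : ℝ) (hab : a < b) (σ : ℝ) (hσ : σ ∈ Set.Ioc (0 : ℝ) 1)
    (A B : ℝ) (hAa : A < a) (hbB : b < B)
    (φ φ' : ℝ → ℝ)
    (hφ : ∀ t ∈ Set.Ioo A B, HasDerivAt φ (φ' t) t)
    (hφ'cont : ContinuousOn φ' (Set.Ioo A B))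
    (hφ'pos : ∀ t ∈ Set.Ioo A B, 0 < φ' t)
    (α β : ℝ) (hα : 0 < α) (hβ : 0 < β)
    (f : ℝ → ℂ) (hf : ContinuousOn f (Set.Icc a b)) :
    ∀ t ∈ Set.Icc a b,
      propIntRight b α σ φ φ' (propIntRight b β σ φ φ' f) t =
        propIntRight b (α + β) σ φ φ' f t := by
  intro t ht
  have hsub : Icc t b ⊆ Ioo A B := fun u hu =>
    ⟨hAa.trans_le (ht.1.trans hu.1), hu.2.trans_lt hbB⟩
  rcases ht.2.eq_or_lt with rfl | htb
  · simp [propIntRight]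
  have hd : ∀ u ∈ Icc t b, HasDerivAt φ (φ' u) u := fun u hu => hφ u (hsub hu)
  have hp : ∀ u ∈ Icc t b, 0 < φ' u := fun u hu => hφ'pos u (hsub hu)
  have hm : StrictMonoOn φ (Icc t b) := by
    apply strictMonoOn_of_deriv_pos (convex_Icc t b)
    · exact fun u hu => (hd u hu).continuousAt.continuousWithinAt
    · intro u hu
      rw [(hd u (interior_subset hu)).deriv]
      exact hp u (interior_subset hu)
  have hmain := aux_main (c := (σ - 1) / σ) hα hβ htb hd hp hm (hφ'cont.mono hsub)
    (hf.mono (Icc_subset_Icc_left ht.1))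
  have hI : ∫ τ in t..b, (Real.exp ((σ - 1) / σ * (φ τ - φ t)) * (φ τ - φ t) ^ (α - 1) * φ' τ) •
      propIntRight b β σ φ φ' f τ = ((σ ^ β * Real.Gamma β)⁻¹ : ℝ) •
      ∫ τ in Ioc t b, (Real.exp ((σ - 1) / σ * (φ τ - φ t)) * (φ τ - φ t) ^ (α - 1) * φ' τ) •
      ∫ s in Ioc τ b,
        (Real.exp ((σ - 1) / σ * (φ s - φ τ)) * (φ s - φ τ) ^ (β - 1) * φ' s) • f s := by
    rw [intervalIntegral.integral_of_le htb.le, ← MeasureTheory.integral_smul]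
    apply setIntegral_congr_fun measurableSet_Ioc
    intro τ hτ
    simp only [propIntRight]
    rw [intervalIntegral.integral_of_le hτ.2, smul_comm]
  rw [propIntRight, hI, hmain, propIntRight, intervalIntegral.integral_of_le htb.le,
    smul_smul, smul_smul]
  congr 1
  have h1 := (Real.Gamma_pos_of_pos hα).ne'
  have h2 := (Real.Gamma_pos_of_pos hβ).ne'
  have h3 := (Real.Gamma_pos_of_pos (add_pos hα hβ)).ne'
  have h4 := (Real.rpow_pos_of_pos hσ.1 α).ne'
  have h5 := (Real.rpow_pos_of_pos hσ.1 β).ne'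
  rw [Real.rpow_add hσ.1, ProbabilityTheory.beta]
  field_simp
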